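/- Let L and S be positive integers with S ≤ L, let γ ∈ (0,1) be the positive root of Lγ + Sγ² = 1, and let (ξ^j)_{j≥1} be the (L,S)-sequence of points. Then (ξ^j)_{j≥1} is uniformly distributed in [0,1): for all real numbers a, b with 0 ≤ a < b ≤ 1, one has lim_{N→∞} (1/N) Σ_{j=1}^{N} χ_{[a,b)}(ξ^j) = b − a. -/

import Mathlib

open Finset Real

noncomputable section

/-- The `k`-th digit of `n` in base `b`. -/
def lsDigit (b n k : ℕ) : ℕ := n / b ^ k % b

/-- Membership in the set `N_{L,S}`: for every `k`, the pair of consecutive digits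
`(a_k(n), a_{k+1}(n))` in base `L+S` does not lie in
`{L,…,L+S−1} × {1,…,L+S−1}`. -/
def memNLS (L S n : ℕ) : Prop :=
  ∀ k : ℕ, ¬ (L ≤ lsDigit (L + S) n k ∧ lsDigit (L + S) n k ≤ L + S - 1 ∧
      1 ≤ lsDigit (L + S) n (k + 1) ∧ lsDigit (L + S) n (k + 1) ≤ L + S - 1)

/-- The modified digit `ã`: `ã = a` if `a ≤ L−1`, and `ã = L + γ(a−L)` if `L ≤ a`. -/
def lsTilde (L : ℕ) (γ : ℝ) (a : ℕ) : ℝ :=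
  if a < L then (a : ℝ) else (L : ℝ) + γ * ((a : ℝ) - (L : ℝ))

/-- The radical-inverse-type function `φ_{L,S}(n) = Σ_{k=0}^{M} ã_k(n) γ^{k+1}`,
with `M = ⌊log_{L+S} n⌋`. -/
def lsPhi (L S : ℕ) (γ : ℝ) (n : ℕ) : ℝ :=
  ∑ k ∈ Finset.range (Nat.log (L + S) n + 1),
    lsTilde L γ (lsDigit (L + S) n k) * γ ^ (k + 1)

/-- The `(L,S)`-sequence of points: `ξ^j = φ_{L,S}(n_j)` where `n_1 < n_2 < ⋯`
is the increasing enumeration of `N_{L,S}` (so `n_j = Nat.nth (memNLS L S) (j-1)`). -/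
def lsSeq (L S : ℕ) (γ : ℝ) (j : ℕ) : ℝ :=
  lsPhi L S γ (Nat.nth (memNLS L S) (j - 1))

/-- One-dimensional discrepancy of the first `N` terms `x 1, …, x N` of a sequence:
`sup_{0 ≤ a < b ≤ 1} |(1/N) Σ_{j=1}^N χ_{[a,b)}(x j) − (b−a)|`. -/
def discrep (x : ℕ → ℝ) (N : ℕ) : ℝ :=
  ⨆ p : {p : ℝ × ℝ // 0 ≤ p.1 ∧ p.1 < p.2 ∧ p.2 ≤ 1},
    |(∑ j ∈ Finset.Icc 1 N,
        Set.indicator (Set.Ico p.1.1 p.1.2) (fun _ => (1 : ℝ)) (x j)) / N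
      - (p.1.2 - p.1.1)|

/-- Two-dimensional (star) discrepancy of the first `N` terms of a sequence of points
in the unit square:
`sup_{0 < a ≤ 1, 0 < b ≤ 1} |(1/N) Σ_{j=1}^N χ_{[0,a)×[0,b)}(x j) − ab|`. -/
def discrep2 (x : ℕ → ℝ × ℝ) (N : ℕ) : ℝ :=
  ⨆ p : {p : ℝ × ℝ // 0 < p.1 ∧ p.1 ≤ 1 ∧ 0 < p.2 ∧ p.2 ≤ 1},
    |(∑ j ∈ Finset.Icc 1 N,
        Set.indicator (Set.Ico (0 : ℝ) p.1.1) (fun _ => (1 : ℝ)) (x j).1 *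
        Set.indicator (Set.Ico (0 : ℝ) p.1.2) (fun _ => (1 : ℝ)) (x j).2) / N
      - p.1.1 * p.1.2|

lemma lsDigit_zero {b d : ℕ} (hd : d < b) (m : ℕ) : lsDigit b (d + b * m) 0 = d := by
  simp [lsDigit, Nat.mod_eq_of_lt hd]

lemma lsDigit_succ {b d : ℕ} (hd : d < b) (m k : ℕ) :
    lsDigit b (d + b * m) (k + 1) = lsDigit b m k := by
  have hb : 0 < b := by omega
  unfold lsDigit
  rw [pow_succ', ← Nat.div_div_eq_div_mul, Nat.add_mul_div_left _ _ hb, Nat.div_eq_of_lt hd,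
    zero_add]

lemma memNLS_digit_add {L S d : ℕ} (hd : d < L + S) (m : ℕ) :
    memNLS L S (d + (L + S) * m) ↔ memNLS L S m ∧ (d < L ∨ m % (L + S) = 0) := by
  have hb : 0 < L + S := by omega
  have h0 : lsDigit (L + S) m 0 = m % (L + S) := by simp [lsDigit]
  have hlt := Nat.mod_lt m hb
  constructor
  · intro h
    refine ⟨fun k => ?_, ?_⟩
    · have := h (k + 1)
      rwa [lsDigit_succ hd, lsDigit_succ hd] at this
    · have := h 0
      rw [lsDigit_zero hd, lsDigit_succ hd, h0] at this
      omega
  · rintro ⟨h, h'⟩ k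
    cases k with
    | zero =>
      rw [lsDigit_zero hd, lsDigit_succ hd, h0]
      omega
    | succ k =>
      rw [lsDigit_succ hd, lsDigit_succ hd]
      exact h k

lemma memNLS_base_mul {L S : ℕ} (hL : 0 < L) (m : ℕ) :
    memNLS L S ((L + S) * m) ↔ memNLS L S m := by
  have := memNLS_digit_add (L := L) (S := S) (d := 0) (by omega) m
  simpa [hL] using this

lemma infinite_memNLS {L S : ℕ} (hL : 0 < L) (hS : 0 < S) : (Set.ofPred (memNLS L S)).Infinite := by
  have h1 : memNLS L S 1 := by
    rintro k ⟨-, -, h, -⟩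
    have : 1 < (L + S) ^ (k + 1) := Nat.one_lt_pow (by omega) (by omega)
    simp [lsDigit, Nat.div_eq_of_lt this] at h
  have hpow : ∀ k, memNLS L S ((L + S) ^ k) := by
    intro k
    induction k with
    | zero => simpa using h1
    | succ k ih => rw [pow_succ', memNLS_base_mul hL]; exact ih
  exact Set.infinite_of_forall_exists_gt fun n =>
    ⟨(L + S) ^ n, hpow n, Nat.lt_pow_self (by omega)⟩

lemma lsPhi_zero {L : ℕ} (hL : 0 < L) (S : ℕ) (γ : ℝ) : lsPhi L S γ 0 = 0 := by
  simp [lsPhi, lsDigit, lsTilde, hL]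

lemma lsPhi_digit_add {L S d : ℕ} (hL : 0 < L) (hS : 0 < S) (hd : d < L + S) (γ : ℝ) (m : ℕ) :
    lsPhi L S γ (d + (L + S) * m) = γ * (lsTilde L γ d + lsPhi L S γ m) := by
  rcases Nat.eq_zero_or_pos m with rfl | hm
  · rw [lsPhi_zero hL]
    have h0 := lsDigit_zero hd 0
    rw [mul_zero, add_zero] at h0 ⊢
    simp [lsPhi, Nat.log_of_lt hd, h0, mul_comm]
  · have hlog : Nat.log (L + S) (d + (L + S) * m) = Nat.log (L + S) m + 1 := by
      rw [Nat.log_of_one_lt_of_le (by omega) (by nlinarith),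
        Nat.add_mul_div_left _ _ (by omega), Nat.div_eq_of_lt hd, zero_add]
    unfold lsPhi
    rw [hlog, Finset.sum_range_succ', mul_add, Finset.mul_sum, add_comm, lsDigit_zero hd]
    congr 1
    · ring
    · refine Finset.sum_congr rfl fun k _ => ?_
      rw [lsDigit_succ hd]
      ring

lemma lsPhi_nonneg (L S : ℕ) {γ : ℝ} (hγ : 0 < γ) (n : ℕ) : 0 ≤ lsPhi L S γ n := by
  refine Finset.sum_nonneg fun k _ => mul_nonneg ?_ (by positivity)
  unfold lsTilde
  split_ifs with h
  · positivity
  · have : (L : ℝ) ≤ lsDigit (L + S) n k := by exact_mod_cast not_lt.mp h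
    have := mul_nonneg hγ.le (sub_nonneg.2 this)
    positivity

lemma lsPhi_base_mul {L S : ℕ} (hL : 0 < L) (hS : 0 < S) (γ : ℝ) (m : ℕ) :
    lsPhi L S γ ((L + S) * m) = γ * lsPhi L S γ m := by
  have := lsPhi_digit_add hL hS (d := 0) (by omega) γ m
  simpa [lsTilde, hL] using this

lemma lsPhi_lt_one {L S : ℕ} (hL : 0 < L) (hS : 0 < S) {γ : ℝ} (hγ0 : 0 < γ)
    (hroot : (L : ℝ) * γ + (S : ℝ) * γ ^ 2 = 1) (n : ℕ) (hn : memNLS L S n) :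
    lsPhi L S γ n < 1 := by
  induction n using Nat.strong_induction_on with
  | _ n ih =>
  rcases Nat.eq_zero_or_pos n with rfl | hpos
  · rw [lsPhi_zero hL]; exact one_pos
  have hb : 1 < L + S := by omega
  have hd : n % (L + S) < L + S := Nat.mod_lt _ (by omega)
  have hm : n / (L + S) < n := Nat.div_lt_self hpos hb
  have hdecomp := Nat.mod_add_div n (L + S)
  generalize n % (L + S) = d at *
  generalize n / (L + S) = m at *
  subst hdecomp
  obtain ⟨hmem, hor⟩ := (memNLS_digit_add hd m).1 hn
  rw [lsPhi_digit_add hL hS hd]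
  by_cases hdL : d < L
  · have h1 := ih m hm hmem
    have h2 : (d : ℝ) + 1 ≤ L := by exact_mod_cast hdL
    simp only [lsTilde, hdL, if_true]
    have : γ * (d + lsPhi L S γ m) < γ * L := mul_lt_mul_of_pos_left (by linarith) hγ0
    nlinarith [mul_nonneg (Nat.cast_nonneg (α := ℝ) S) (sq_nonneg γ)]
  · obtain ⟨q, rfl⟩ := Nat.dvd_of_mod_eq_zero (hor.resolve_left hdL)
    have hq : q ≤ (L + S) * q := Nat.le_mul_of_pos_left _ (by omega)
    have h1 := ih q (by omega) ((memNLS_base_mul hL q).1 hmem)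
    have h2 : (d : ℝ) + 1 ≤ L + S := by exact_mod_cast hd
    rw [lsPhi_base_mul hL hS]
    simp only [lsTilde, hdL, if_false]
    have : γ ^ 2 * (d - L + lsPhi L S γ q) < γ ^ 2 * S :=
      mul_lt_mul_of_pos_left (by linarith) (by positivity)
    nlinarith

open Classical in
/-- The number of `n < X` in `N_{L,S}` with `φ_{L,S}(n) < x`. -/
def lsCount (L S : ℕ) (γ : ℝ) (X : ℕ) (x : ℝ) : ℝ :=
  ∑ n ∈ Finset.range X, if memNLS L S n ∧ lsPhi L S γ n < x then 1 else 0

lemma sum_range_mul_eq (b Z : ℕ) (f : ℕ → ℝ) :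
    ∑ n ∈ Finset.range (b * Z), f n =
      ∑ d ∈ Finset.range b, ∑ m ∈ Finset.range Z, f (d + b * m) := by
  rw [Finset.sum_comm]
  induction Z with
  | zero => simp
  | succ Z ih =>
    rw [mul_add, mul_one, Finset.sum_range_add, ih, Finset.sum_range_succ]
    simp [add_comm]

section Count

variable {L S : ℕ} {γ : ℝ}

lemma lsCount_add_bounds (X r : ℕ) (x : ℝ) :
    lsCount L S γ X x ≤ lsCount L S γ (X + r) x ∧
      lsCount L S γ (X + r) x ≤ lsCount L S γ X x + r := by
  unfold lsCount
  rw [Finset.sum_range_add]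
  constructor
  · exact le_add_of_nonneg_right (Finset.sum_nonneg fun _ _ => by split_ifs <;> norm_num)
  · gcongr
    refine (Finset.sum_le_card_nsmul _ _ 1 fun _ _ => ?_).trans (by simp)
    split_ifs <;> norm_num

lemma lsCount_of_nonpos (hγ0 : 0 < γ) (X : ℕ) {x : ℝ} (hx : x ≤ 0) : lsCount L S γ X x = 0 :=
  Finset.sum_eq_zero fun n _ => if_neg fun h =>
    (h.2.trans_le hx).not_ge (lsPhi_nonneg L S hγ0 n)

lemma lsCount_nonneg (X : ℕ) (x : ℝ) : 0 ≤ lsCount L S γ X x :=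
  Finset.sum_nonneg fun _ _ => by split_ifs <;> norm_num

lemma lsCount_mono (X : ℕ) {x y : ℝ} (hxy : x ≤ y) : lsCount L S γ X x ≤ lsCount L S γ X y := by
  refine Finset.sum_le_sum fun n _ => ?_
  split_ifs with h1 h2
  · rfl
  · exact absurd ⟨h1.1, h1.2.trans_le hxy⟩ h2
  · norm_num
  · rfl

lemma lsCount_of_one_le (hL : 0 < L) (hS : 0 < S) (hγ0 : 0 < γ)
    (hroot : (L : ℝ) * γ + (S : ℝ) * γ ^ 2 = 1) (X : ℕ) {x : ℝ} (hx : 1 ≤ x) :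
    lsCount L S γ X x = lsCount L S γ X 1 := by
  classical
  refine Finset.sum_congr rfl fun n _ => if_congr ?_ rfl rfl
  refine and_congr_right fun h => ?_
  have := lsPhi_lt_one hL hS hγ0 hroot n h
  exact iff_of_true (this.trans_le hx) this

lemma lsCount_base_sq_mul (hL : 0 < L) (hS : 0 < S) (hγ0 : 0 < γ) (Y : ℕ) (x : ℝ) :
    lsCount L S γ ((L + S) * ((L + S) * Y)) x =
      ∑ d ∈ Finset.range L, lsCount L S γ ((L + S) * Y) (x / γ - d) +
        ∑ e ∈ Finset.range S, lsCount L S γ Y ((x - L * γ) / γ ^ 2 - e) := by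
  classical
  unfold lsCount
  rw [sum_range_mul_eq, Finset.sum_range_add]
  congr 1
  · refine Finset.sum_congr rfl fun d hd => Finset.sum_congr rfl fun m _ =>
      if_congr ?_ rfl rfl
    have hd : d < L := Finset.mem_range.1 hd
    rw [memNLS_digit_add (by omega), lsPhi_digit_add hL hS (by omega), lsTilde, if_pos hd,
      lt_sub_iff_add_lt', lt_div_iff₀' hγ0]
    simp [hd]
  · refine Finset.sum_congr rfl fun e he => ?_
    have he : e < S := Finset.mem_range.1 he
    rw [sum_range_mul_eq, Finset.sum_eq_single 0]
    · refine Finset.sum_congr rfl fun m _ => if_congr ?_ rfl rfl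
      rw [zero_add, memNLS_digit_add (by omega), lsPhi_digit_add hL hS (by omega), lsTilde,
        if_neg (by omega), lsPhi_base_mul hL hS, memNLS_base_mul hL,
        lt_sub_iff_add_lt', lt_div_iff₀' (by positivity), lt_sub_iff_add_lt']
      have : γ * (L + γ * (((L + e : ℕ) : ℝ) - L) + γ * lsPhi L S γ m) =
          L * γ + γ ^ 2 * (e + lsPhi L S γ m) := by push_cast; ring
      rw [this]
      simp
    · intro d' hd' hne
      have hd' : d' < L + S := Finset.mem_range.1 hd'
      refine Finset.sum_eq_zero fun m _ => if_neg fun h => ?_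
      have := ((memNLS_digit_add (by omega) _).1 h.1).2
      rw [Nat.add_mul_mod_self_left, Nat.mod_eq_of_lt hd'] at this
      omega
    · simp; omega

lemma lsCount_base_sq_mul_one (hL : 0 < L) (hS : 0 < S) (hγ0 : 0 < γ)
    (hroot : (L : ℝ) * γ + (S : ℝ) * γ ^ 2 = 1) (Y : ℕ) :
    lsCount L S γ ((L + S) * ((L + S) * Y)) 1 =
      L * lsCount L S γ ((L + S) * Y) 1 + S * lsCount L S γ Y 1 := by
  rw [lsCount_base_sq_mul hL hS hγ0]
  congr 1
  · rw [Finset.sum_congr rfl (g := fun _ => lsCount L S γ ((L + S) * Y) 1)]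
    · simp
    · intro d hd
      have h2 : (d : ℝ) + 1 ≤ L := by exact_mod_cast Finset.mem_range.1 hd
      refine lsCount_of_one_le hL hS hγ0 hroot _ ?_
      rw [le_sub_iff_add_le', le_div_iff₀ hγ0]
      nlinarith [mul_nonneg (Nat.cast_nonneg (α := ℝ) S) (sq_nonneg γ)]
  · rw [Finset.sum_congr rfl (g := fun _ => lsCount L S γ Y 1)]
    · simp
    · intro d hd
      have h2 : (d : ℝ) + 1 ≤ S := by exact_mod_cast Finset.mem_range.1 hd
      refine lsCount_of_one_le hL hS hγ0 hroot _ ?_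
      rw [le_sub_iff_add_le', le_div_iff₀ (by positivity)]
      nlinarith [mul_le_mul_of_nonneg_right h2 (sq_nonneg γ)]

/-- The counting function of `N_{L,S}` scales by `1 / γ` up to a bounded error. -/
lemma exists_lsCount_scaling_bound (hL : 0 < L) (hS : 0 < S) (hSL : S ≤ L) (hγ0 : 0 < γ)
    (hroot : (L : ℝ) * γ + (S : ℝ) * γ ^ 2 = 1) :
    ∃ M : ℝ, 0 ≤ M ∧ ∀ Y,
      |lsCount L S γ ((L + S) * Y) 1 - lsCount L S γ Y 1 / γ| ≤ M := by
  have hS' : (0 : ℝ) < S := by exact_mod_cast hS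
  have hSγ : S * γ < 1 := by
    have : (S : ℝ) ≤ L := by exact_mod_cast hSL
    have : 0 < S * γ ^ 2 := by positivity
    nlinarith
  set b := L + S with hb
  set K : ℝ := (b : ℝ) * b + b / γ with hK
  have hK0 : 0 ≤ K := by positivity
  refine ⟨K / (1 - S * γ), div_nonneg hK0 (by linarith), fun Y => ?_⟩
  have hM : K / (1 - S * γ) = S * γ * (K / (1 - S * γ)) + K := by
    field_simp [show (1 - S * γ) ≠ 0 by linarith]
    ring
  induction Y using Nat.strong_induction_on with
  | _ Y ih =>
  rcases Nat.eq_zero_or_pos Y with rfl | hpos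
  · simp only [mul_zero, lsCount, Finset.range_zero, Finset.sum_empty, zero_div, sub_zero, abs_zero]
    exact div_nonneg hK0 (by linarith)
  have hr : Y % b < b := Nat.mod_lt _ (by omega)
  have hZ : Y / b < Y := Nat.div_lt_self hpos (by omega)
  have hdecomp := Nat.div_add_mod Y b
  generalize Y % b = r at *
  generalize Y / b = Z at *
  subst hdecomp
  have hrb : (r : ℝ) ≤ b := by exact_mod_cast hr.le
  have hbr : (b : ℝ) * r ≤ b * b := by gcongr
  have hrγ : (r : ℝ) / γ ≤ b / γ := by gcongr
  have h1 := lsCount_add_bounds (L := L) (S := S) (γ := γ) (b * Z) r 1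
  have h2 := lsCount_add_bounds (L := L) (S := S) (γ := γ) (b * (b * Z)) (b * r) 1
  rw [← mul_add] at h2
  have h3 := lsCount_base_sq_mul_one hL hS hγ0 hroot Z
  rw [← hb] at h3
  have hih := ih Z hZ
  push_cast at h2
  generalize lsCount L S γ (b * (b * Z)) 1 = C2 at *
  generalize lsCount L S γ (b * Z) 1 = C1 at *
  generalize lsCount L S γ Z 1 = C0 at *
  have h4 : C2 - C1 / γ = -(S * γ) * (C1 - C0 / γ) := by
    have : C1 / γ = C1 * (L + S * γ) := by
      rw [div_eq_iff hγ0.ne']; linear_combination (-C1) * hroot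
    rw [this, h3]; field_simp; ring
  have h5 : |C2 - C1 / γ| ≤ S * γ * (K / (1 - S * γ)) := by
    rw [h4, abs_mul, abs_neg, abs_of_pos (by positivity)]
    gcongr
  have h6 : C1 / γ ≤ lsCount L S γ (b * Z + r) 1 / γ := by gcongr; exact h1.1
  have h7 : lsCount L S γ (b * Z + r) 1 / γ ≤ C1 / γ + r / γ := by
    rw [← add_div]; gcongr; exact h1.2
  have h8 : (0 : ℝ) ≤ b * b := by positivity
  have h9 : (0 : ℝ) ≤ b / γ := by positivity
  rw [hM]
  rw [abs_le] at h5 ⊢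
  constructor <;> linarith [h5.1, h5.2, h2.1, h2.2]

/-- Summing integer translates of a function that vanishes left of `0` and equals `C` right of `1`
does not increase its distance from the linear function of slope `C`. -/
lemma abs_sum_translates_sub_le {f : ℝ → ℝ} {C E : ℝ} (hE : 0 ≤ E) (h0 : ∀ x ≤ 0, f x = 0)
    (h1 : ∀ x, 1 ≤ x → f x = C) (hf : ∀ x, 0 ≤ x → x ≤ 1 → |f x - x * C| ≤ E) (n : ℕ) (t : ℝ)
    (ht0 : 0 ≤ t) (htn : t ≤ n) :
    |∑ d ∈ Finset.range n, f (t - d) - t * C| ≤ E := by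
  induction n with
  | zero =>
    have : t = 0 := le_antisymm (by simpa using htn) ht0
    simpa [this] using hE
  | succ n ih =>
    rw [Finset.sum_range_succ]
    rcases le_total t n with h | h
    · rw [h0 _ (by linarith), add_zero]
      exact ih h
    · have : ∑ d ∈ Finset.range n, f (t - d) = n * C := by
        rw [Finset.sum_congr rfl (g := fun _ => C)]
        · simp
        · intro d hd
          have h2 : (d : ℝ) + 1 ≤ n := by exact_mod_cast Finset.mem_range.1 hd
          exact h1 _ (by linarith)
      rw [this]
      push_cast at htn
      convert hf (t - n) (by linarith) (by linarith) using 2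
      ring

lemma exists_abs_lsCount_sub_le (hL : 0 < L) (hS : 0 < S) (hSL : S ≤ L) (hγ0 : 0 < γ)
    (hγ1 : γ < 1) (hroot : (L : ℝ) * γ + (S : ℝ) * γ ^ 2 = 1) (k : ℕ) :
    ∃ K : ℝ, 0 ≤ K ∧ ∀ X : ℕ, ∀ x : ℝ, 0 ≤ x → x ≤ 1 →
      |lsCount L S γ X x - x * lsCount L S γ X 1| ≤ γ ^ k * lsCount L S γ X 1 + K := by
  obtain ⟨M, hM0, hM⟩ := exists_lsCount_scaling_bound hL hS hSL hγ0 hroot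
  induction k with
  | zero =>
    refine ⟨0, le_rfl, fun X x hx0 hx1 => ?_⟩
    have h1 := lsCount_nonneg (L := L) (S := S) (γ := γ) X x
    have h2 := lsCount_mono (L := L) (S := S) (γ := γ) X hx1
    rw [abs_le]
    constructor <;> nlinarith
  | succ k ih =>
    obtain ⟨K, hK0, hK⟩ := ih
    set b := L + S with hb
    refine ⟨K + 3 * M + M / γ + 2 * (b * b), by positivity, fun X x hx0 hx1 => ?_⟩
    have hγk : γ ^ k ≤ 1 := pow_le_one₀ hγ0.le hγ1.le
    have hγk0 : 0 < γ ^ k := by positivity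
    have hr : X % (b * b) < b * b := Nat.mod_lt _ (Nat.mul_pos (by omega) (by omega))
    have hdecomp := Nat.div_add_mod X (b * b)
    generalize X % (b * b) = r at *
    generalize X / (b * b) = Y at *
    rw [mul_assoc] at hdecomp
    subst hdecomp
    have hrb : (r : ℝ) ≤ b * b := by exact_mod_cast hr.le
    have hx := lsCount_add_bounds (L := L) (S := S) (γ := γ) (b * (b * Y)) r x
    have hone := lsCount_add_bounds (L := L) (S := S) (γ := γ) (b * (b * Y)) r 1
    have hsum := lsCount_base_sq_mul hL hS hγ0 Y x
    rw [← hb] at hsum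
    have htrans : ∀ Z n : ℕ, ∀ t : ℝ, 0 ≤ t → t ≤ n →
        |∑ d ∈ Finset.range n, lsCount L S γ Z (t - d) - t * lsCount L S γ Z 1| ≤
          γ ^ k * lsCount L S γ Z 1 + K := fun Z n t =>
      abs_sum_translates_sub_le
        (add_nonneg (mul_nonneg hγk0.le (lsCount_nonneg Z 1)) hK0)
        (fun _ => lsCount_of_nonpos hγ0 Z) (fun _ => lsCount_of_one_le hL hS hγ0 hroot Z)
        (hK Z) n t
    have hc2 := lsCount_nonneg (L := L) (S := S) (γ := γ) (b * (b * Y)) 1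
    have hM1 := hM (b * Y)
    have hM2 := hM Y
    have hT1 := htrans (b * Y) L (x / γ) (by positivity)
    have hT2 := htrans Y S ((x - L * γ) / γ ^ 2)
    have hbase : |lsCount L S γ (b * (b * Y)) x - x * lsCount L S γ (b * (b * Y)) 1| ≤
        γ ^ (k + 1) * lsCount L S γ (b * (b * Y)) 1 + (K + 3 * M + M / γ) := by
      rcases le_total x (L * γ) with hxL | hxL
      · have hzero : ∑ e ∈ Finset.range S, lsCount L S γ Y ((x - L * γ) / γ ^ 2 - e) = 0 := by
          refine Finset.sum_eq_zero fun e _ => lsCount_of_nonpos hγ0 Y ?_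
          have : (x - L * γ) / γ ^ 2 ≤ 0 := div_nonpos_of_nonpos_of_nonneg (by linarith)
            (by positivity)
          have : (0 : ℝ) ≤ e := by positivity
          linarith
        have hT := hT1 ((div_le_iff₀ hγ0).2 hxL)
        rw [hsum, hzero, add_zero]
        generalize lsCount L S γ (b * (b * Y)) 1 = C2 at *
        generalize lsCount L S γ (b * Y) 1 = C1 at *
        generalize ∑ d ∈ Finset.range L, lsCount L S γ (b * Y) (x / γ - d) = T at *
        have e1 : |x * (C2 - C1 / γ)| ≤ M := by
          rw [abs_mul, abs_of_nonneg hx0]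
          exact (mul_le_of_le_one_left (abs_nonneg _) hx1).trans hM1
        have e2 : γ ^ k * C1 ≤ γ ^ (k + 1) * C2 + M := by
          have : C1 ≤ γ * (C2 + M) := by
            rw [← div_le_iff₀' hγ0]; linarith [(abs_le.1 hM1).1]
          calc γ ^ k * C1 ≤ γ ^ k * (γ * (C2 + M)) := by gcongr
            _ = γ ^ (k + 1) * C2 + γ ^ (k + 1) * M := by ring
            _ ≤ _ := by
              gcongr
              exact mul_le_of_le_one_left hM0 (pow_le_one₀ hγ0.le hγ1.le)
        have e3 : T - x * C2 = (T - x / γ * C1) - x * (C2 - C1 / γ) := by ring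
        have : 0 ≤ M / γ := by positivity
        rw [e3]
        refine (abs_sub _ _).trans ?_
        linarith
      · have hfull : ∑ d ∈ Finset.range L, lsCount L S γ (b * Y) (x / γ - d) =
            L * lsCount L S γ (b * Y) 1 := by
          rw [Finset.sum_congr rfl (g := fun _ => lsCount L S γ (b * Y) 1)]
          · simp
          · intro d hd
            have h2 : (d : ℝ) + 1 ≤ L := by exact_mod_cast Finset.mem_range.1 hd
            refine lsCount_of_one_le hL hS hγ0 hroot _ ?_
            rw [le_sub_iff_add_le', le_div_iff₀ hγ0]
            nlinarith
        have hT := hT2 (div_nonneg (by linarith) (by positivity))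
          ((div_le_iff₀ (by positivity)).2 (by linarith))
        rw [hsum, hfull]
        generalize lsCount L S γ (b * (b * Y)) 1 = C2 at *
        generalize lsCount L S γ (b * Y) 1 = C1 at *
        generalize lsCount L S γ Y 1 = C0 at *
        generalize ∑ e ∈ Finset.range S, lsCount L S γ Y ((x - L * γ) / γ ^ 2 - e) = T at *
        have e1 : |x * (C2 - C1 / γ)| ≤ M := by
          rw [abs_mul, abs_of_nonneg hx0]
          exact (mul_le_of_le_one_left (abs_nonneg _) hx1).trans hM1
        have e4 : |(x - L * γ) * ((C1 - C0 / γ) / γ)| ≤ M / γ := by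
          have : x - L * γ ≤ 1 := by
            have : 0 ≤ L * γ := by positivity
            linarith
          rw [abs_mul, abs_of_nonneg (by linarith : 0 ≤ x - L * γ), abs_div, abs_of_pos hγ0]
          refine (mul_le_of_le_one_left (by positivity) this).trans ?_
          gcongr
        have e2 : γ ^ k * C0 ≤ γ ^ (k + 1) * C2 + 2 * M := by
          have h1 : C1 ≤ C2 + M := by
            have h : C1 ≤ γ * (C2 + M) := by
              rw [← div_le_iff₀' hγ0]; linarith [(abs_le.1 hM1).1]
            exact h.trans (mul_le_of_le_one_left (by linarith) hγ1.le)
          have h2 : C0 ≤ γ * (C1 + M) := by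
            rw [← div_le_iff₀' hγ0]; linarith [(abs_le.1 hM2).1]
          calc γ ^ k * C0 ≤ γ ^ k * (γ * (C1 + M)) := by gcongr
            _ ≤ γ ^ k * (γ * (C2 + M + M)) := by gcongr
            _ = γ ^ (k + 1) * C2 + γ ^ (k + 1) * (2 * M) := by ring
            _ ≤ _ := by
              have := mul_le_of_le_one_left (show 0 ≤ 2 * M by positivity)
                (pow_le_one₀ (n := k + 1) hγ0.le hγ1.le)
              linarith
        have e3 : L * C1 + T - x * C2 = (T - (x - L * γ) / γ ^ 2 * C0) -
            (x * (C2 - C1 / γ) + (x - L * γ) * ((C1 - C0 / γ) / γ)) := by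
          field_simp
          ring
        rw [e3]
        refine (abs_sub _ _).trans ?_
        have := abs_add_le (x * (C2 - C1 / γ)) ((x - L * γ) * ((C1 - C0 / γ) / γ))
        linarith
    have hmono : γ ^ (k + 1) * lsCount L S γ (b * (b * Y)) 1 ≤
        γ ^ (k + 1) * lsCount L S γ (b * (b * Y) + r) 1 := by
      gcongr
      exact hone.1
    have g1 : x * lsCount L S γ (b * (b * Y)) 1 ≤ x * lsCount L S γ (b * (b * Y) + r) 1 := by
      gcongr
      exact hone.1
    have g2 : x * lsCount L S γ (b * (b * Y) + r) 1 ≤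
        x * lsCount L S γ (b * (b * Y)) 1 + r := by
      calc _ ≤ x * (lsCount L S γ (b * (b * Y)) 1 + r) := by gcongr; exact hone.2
        _ = x * lsCount L S γ (b * (b * Y)) 1 + x * r := by ring
        _ ≤ _ := by
          gcongr
          exact mul_le_of_le_one_left (by positivity) hx1
    have hr0 : (0 : ℝ) ≤ r := by positivity
    rw [abs_le] at hbase ⊢
    constructor <;> linarith [hbase.1, hbase.2, hx.1, hx.2]

/-- Sums along the enumeration of `N_{L,S}` as counts up to the `N`-th element. -/
lemma sum_Icc_lsSeq (hL : 0 < L) (hS : 0 < S) (x : ℝ) (N : ℕ) :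
    ∑ j ∈ Finset.Icc 1 N, Set.indicator (Set.Iio x) (fun _ => (1 : ℝ)) (lsSeq L S γ j) =
      lsCount L S γ (Nat.nth (memNLS L S) N) x := by
  classical
  have hinf := infinite_memNLS hL hS
  have hcount : ∀ X, lsCount L S γ X x = ∑ n ∈ Finset.range X with memNLS L S n,
      Set.indicator (Set.Iio x) (fun _ => (1 : ℝ)) (lsPhi L S γ n) := by
    intro X
    rw [Finset.sum_filter]
    refine Finset.sum_congr rfl fun n _ => ?_
    by_cases h : memNLS L S n <;> simp [h, Set.indicator_apply]
  rw [hcount]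
  induction N with
  | zero =>
    symm
    refine Finset.sum_eq_zero fun n hn => ?_
    rw [Finset.mem_filter, Finset.mem_range] at hn
    rw [Nat.nth_zero] at hn
    exact absurd hn.2 (Nat.notMem_of_lt_sInf hn.1)
  | succ N ih =>
    rw [Finset.sum_Icc_succ_top (by omega), ih, Nat.filter_range_nth_eq_insert_of_infinite hinf,
      Finset.sum_insert (by simp), add_comm]
    rfl

end Count

/-- If `S ≤ L`, the `(L,S)`-sequence of points is uniformly
distributed in `[0,1)`: for all `0 ≤ a < b ≤ 1`,
`(1/N) Σ_{j=1}^N χ_{[a,b)}(ξ^j) → b − a` as `N → ∞`. -/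
theorem ls_seq_uniformly_distributed (L S : ℕ) (hL : 0 < L) (hS : 0 < S) (hSL : S ≤ L)
    (γ : ℝ) (hγ0 : 0 < γ) (hγ1 : γ < 1)
    (hroot : (L : ℝ) * γ + (S : ℝ) * γ ^ 2 = 1) :
    ∀ a b : ℝ, 0 ≤ a → a < b → b ≤ 1 →
      Filter.Tendsto
        (fun N : ℕ => (∑ j ∈ Finset.Icc 1 N,
          Set.indicator (Set.Ico a b) (fun _ => (1 : ℝ)) (lsSeq L S γ j)) / N)
        Filter.atTop (nhds (b - a)) := by
  intro a b ha hab hb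
  set P := fun N : ℕ => Nat.nth (memNLS L S) N
  have hone : ∀ N : ℕ, lsCount L S γ (P N) 1 = N := by
    intro N
    rw [← sum_Icc_lsSeq hL hS 1 N, Finset.sum_congr rfl (g := fun _ => (1 : ℝ))]
    · simp
    · intro j _
      exact Set.indicator_of_mem (s := Set.Iio (1 : ℝ)) (lsPhi_lt_one hL hS hγ0 hroot _
        (Nat.nth_mem_of_infinite (infinite_memNLS hL hS) _)) _
  have hsum : ∀ N : ℕ, ∑ j ∈ Finset.Icc 1 N,
      Set.indicator (Set.Ico a b) (fun _ => (1 : ℝ)) (lsSeq L S γ j) =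
        lsCount L S γ (P N) b - lsCount L S γ (P N) a := by
    intro N
    rw [← sum_Icc_lsSeq hL hS b N, ← sum_Icc_lsSeq hL hS a N, ← Finset.sum_sub_distrib]
    refine Finset.sum_congr rfl fun j _ => ?_
    simp only [Set.indicator_apply, Set.mem_Ico, Set.mem_Iio]
    split_ifs <;> grind
  rw [Metric.tendsto_atTop]
  intro ε hε
  obtain ⟨k, hk⟩ := exists_pow_lt_of_lt_one (show 0 < ε / 4 by positivity) hγ1
  obtain ⟨K, hK0, hK⟩ := exists_abs_lsCount_sub_le hL hS hSL hγ0 hγ1 hroot k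
  obtain ⟨N₀, hN₀⟩ := exists_nat_gt (4 * K / ε)
  refine ⟨N₀ + 1, fun N hN => ?_⟩
  have hN1 : (N₀ : ℝ) + 1 ≤ N := by exact_mod_cast hN
  have hNpos : (0 : ℝ) < N := by
    have : (0 : ℝ) ≤ N₀ := by positivity
    linarith
  have hKN : 4 * K < N * ε := by
    rw [← div_lt_iff₀ hε]; linarith
  have hkN : γ ^ k * N < ε / 4 * N := by gcongr
  have h1 := hK (P N) a ha (by linarith)
  have h2 := hK (P N) b (by linarith) hb
  rw [hone] at h1 h2
  rw [Real.dist_eq, hsum, div_sub' hNpos.ne', abs_div, abs_of_pos hNpos, div_lt_iff₀ hNpos]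
  rw [abs_le] at h1 h2
  rw [abs_lt]
  constructor <;> nlinarith [h1.1, h1.2, h2.1, h2.2]
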